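/- arXiv:math/9602213 — 6 statements merged into one kernel-verified Lean document; each statement's English description precedes it below -/
import Mathlib

section
/- Let L be a Lagrangean subspace of a finite-dimensional complex symplectic vector space (V,ω) with compatible real structure τ, and let γ(X,Y) = i·ω(X, τY). Then the restriction of γ to L is nondegenerate (i.e. for x ∈ L, if γ(x,y) = 0 for all y ∈ L then x = 0) if and only if L ∩ τ(L) = {0}, where τ(L) = {τx : x ∈ L}. -/
open ComplexConjugate

/-- Let `L` be a Lagrangean subspace of a finite-dimensional complex symplectic vector space
`(V, ω)` with compatible real structure `τ`, and `γ(x,y) = i·ω(x, τ y)`. Then `γ|L` is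
nondegenerate iff `L ∩ τ(L) = 0` (equivalently: `x ∈ L` with `τ x ∈ L` forces `x = 0`,
since `τ` is an involution). -/
theorem stmt_1 (V : Type*) [AddCommGroup V] [Module ℂ V] [FiniteDimensional ℂ V]
    (ω : V →ₗ[ℂ] V →ₗ[ℂ] ℂ)
    (halt : ∀ x, ω x x = 0)
    (hnondeg : ∀ x, (∀ y, ω x y = 0) → x = 0)
    (τ : V → V)
    (hτadd : ∀ x y, τ (x + y) = τ x + τ y)
    (hτsmul : ∀ (c : ℂ) (x : V), τ (c • x) = conj c • τ x)
    (hτinv : ∀ x, τ (τ x) = x)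
    (hcompat : ∀ x y, ω (τ x) (τ y) = conj (ω x y))
    (L : Submodule ℂ V)
    (hLiso : ∀ x ∈ L, ∀ y ∈ L, ω x y = 0)
    (hLdim : 2 * Module.finrank ℂ L = Module.finrank ℂ V) :
    (∀ x ∈ L, (∀ y ∈ L, Complex.I * ω x (τ y) = 0) → x = 0) ↔
      (∀ x ∈ L, τ x ∈ L → x = 0) := by
  have hc : ∀ x y, ω (τ x) y = conj (ω x (τ y)) := by
    intro x y
    rw [← hcompat, hτinv]
  have hker : LinearMap.ker ω = ⊥ := by
    rw [LinearMap.ker_eq_bot']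
    intro x hx
    exact hnondeg x fun y => by rw [hx]; rfl
  have hrefl : ∀ x y, ω x y = 0 → ω y x = 0 := by
    intro x y h
    have h1 := halt (x + y)
    simpa [halt, h] using h1
  have hdim := LinearMap.BilinForm.finrank_add_finrank_orthogonal' (B := ω) L
  rw [hker, inf_bot_eq, finrank_bot, add_zero] at hdim
  have hle : L ≤ LinearMap.BilinForm.orthogonal ω L := fun x hx n hn => hLiso n hn x hx
  have heq : L = LinearMap.BilinForm.orthogonal ω L :=
    Submodule.eq_of_le_of_finrank_eq hle (by omega)
  constructor
  · intro H x hx hτx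
    refine H x hx fun y hy => ?_
    have h := hc x y
    rw [hLiso _ hτx y hy] at h
    have h2 : ω x (τ y) = 0 := (map_eq_zero (starRingEnd ℂ)).1 h.symm
    rw [h2, mul_zero]
  · intro H x hx hy
    refine H x hx ?_
    rw [heq, LinearMap.BilinForm.mem_orthogonal_iff]
    intro n hn
    apply hrefl
    have h2 : ω x (τ n) = 0 := (mul_eq_zero.1 (hy n hn)).resolve_left Complex.I_ne_zero
    rw [hc, h2, map_zero]
end

section
/- Let d ≥ 2, let H be a symmetric ℂ-multilinear form in d arguments on ℂⁿ, and define F(z_0, Z) = H(Z,…,Z)/z_0^{d−2} on {(z_0,Z) ∈ ℂ × ℂⁿ : z_0 ≠ 0}. Then for every Z ∈ ℂⁿ the complex Hessian bilinear form B of F at the point ζ = (1, Z) satisfies B(ζ, ζ̄) = −(d−2)·H(Z,…,Z) + d·H(Z,…,Z, conj(Z)), where ζ̄ = (1, conj(Z)) and conj denotes entrywise complex conjugation. -/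
open ComplexConjugate

theorem multilinear_continuous_aux {n d : ℕ}
    (H : MultilinearMap ℂ (fun _ : Fin d => (Fin n → ℂ)) ℂ) : Continuous H := by
  have h : ∀ v : Fin d → (Fin n → ℂ), H v = ∑ r : Fin d → Fin n,
      (∏ i, v i (r i)) • H (fun i => Pi.single (M := fun _ => ℂ) (r i) (1 : ℂ)) := by
    intro v
    have h1 : v = fun i => ∑ j, (v i j) • Pi.single (M := fun _ => ℂ) j (1 : ℂ) := by
      funext i
      exact pi_eq_sum_univ' (v i)
    conv_lhs => rw [h1]
    rw [MultilinearMap.map_sum]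
    exact Finset.sum_congr rfl fun r _ => H.map_smul_univ _ _
  have h' : (H : (Fin d → (Fin n → ℂ)) → ℂ) = fun v => _ := funext h
  rw [h']
  fun_prop

/-- For a symmetric `d`-multilinear form `H` on `ℂⁿ` (`d ≥ 2`) and
`F(z₀, Z) = H(Z,…,Z)/z₀^{d−2}`, the complex Hessian bilinear form `B` of `F` at the point
`ζ = (1, Z)` satisfies `B(ζ, ζ̄) = −(d−2)·H(Z,…,Z) + d·H(Z,…,Z, conj Z)`. -/
theorem stmt_4 (n d : ℕ) (hd : 2 ≤ d)
    (H : MultilinearMap ℂ (fun _ : Fin d => (Fin n → ℂ)) ℂ)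
    (hsymm : ∀ (σ : Equiv.Perm (Fin d)) (v : Fin d → (Fin n → ℂ)), H (v ∘ σ) = H v)
    (Z : Fin n → ℂ) :
    fderiv ℂ
        (fun w : ℂ × (Fin n → ℂ) =>
          fderiv ℂ (fun u : ℂ × (Fin n → ℂ) => H (fun _ => u.2) / u.1 ^ (d - 2)) w
            ((1 : ℂ), fun j => conj (Z j)))
        ((1 : ℂ), Z) ((1 : ℂ), Z) =
      -((d : ℂ) - 2) * H (fun _ => Z) +
        (d : ℂ) * H (Function.update (fun _ => Z) (⟨d - 1, by omega⟩ : Fin d)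
          (fun j => conj (Z j))) := by
  generalize (fun j => conj (Z j)) = c
  set Hc : ContinuousMultilinearMap ℂ (fun _ : Fin d => (Fin n → ℂ)) ℂ :=
    ⟨H, multilinear_continuous_aux H⟩ with hHc
  have hH : ∀ v, H v = Hc v := fun _ => rfl
  set F : ℂ × (Fin n → ℂ) → ℂ := fun u => H (fun _ => u.2) / u.1 ^ (d - 2) with hF
  have hnum : ContDiff ℂ 2 (fun u : ℂ × (Fin n → ℂ) => H (fun _ => u.2)) := by
    simp only [hH]
    exact Hc.contDiff.comp (contDiff_pi.2 fun _ => contDiff_snd)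
  have hFc : ContDiffAt ℂ 2 F ((1 : ℂ), Z) := by
    refine hnum.contDiffAt.div (contDiff_fst.pow _).contDiffAt ?_
    simp
  have hhom : ∀ (t : ℂ), t ≠ 0 → ∀ u, F (t • u) = t ^ 2 • F u := by
    intro t ht u
    have h1 : H (fun _ => t • u.2) = t ^ d * H (fun _ => u.2) := by
      have := H.map_smul_univ (fun _ => t) (fun _ => u.2)
      simpa using this
    simp only [hF, Prod.smul_snd, Prod.smul_fst, h1, smul_eq_mul, mul_pow]
    obtain ⟨e, rfl⟩ := Nat.exists_eq_add_of_le hd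
    have : 2 + e - 2 = e := by omega
    rw [this, pow_add, mul_comm (t ^ 2), mul_assoc, mul_div_mul_left _ _ (pow_ne_zero _ ht),
      mul_div_assoc]
  have hhom' : ∀ (t : ℂ), t ≠ 0 → fderiv ℂ F (t • ((1 : ℂ), Z)) = t • fderiv ℂ F ((1 : ℂ), Z) := by
    intro t ht
    have h1 : (fun u => F (t • u)) = t ^ 2 • F := by
      ext u; exact hhom t ht u
    have h2 := fderiv_comp_smul (𝕜 := ℂ) (f := F) (x := ((1 : ℂ), Z)) t
    rw [h1, fderiv_const_smul (hFc.differentiableAt (by norm_num)), pow_two, mul_smul] at h2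
    exact (smul_right_injective _ ht h2).symm
  have hG : DifferentiableAt ℂ (fun w => fderiv ℂ F w ((1 : ℂ), c)) ((1 : ℂ), Z) :=
    ((hFc.fderiv_right (m := 1) (by norm_num)).differentiableAt (by norm_num)).clm_apply
      (differentiableAt_const _)
  have key : fderiv ℂ (fun w => fderiv ℂ F w ((1 : ℂ), c)) ((1 : ℂ), Z) ((1 : ℂ), Z)
      = fderiv ℂ F ((1 : ℂ), Z) ((1 : ℂ), c) := by
    have hl : HasDerivAt (fun t : ℂ => t • ((1 : ℂ), Z)) ((1 : ℂ), Z) 1 := by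
      simpa using (hasDerivAt_id (1 : ℂ)).smul_const ((1 : ℂ), Z)
    have h1 := HasFDerivAt.comp_hasDerivAt_of_eq (1 : ℂ) hG.hasFDerivAt hl (by simp)
    have h2 : HasDerivAt (fun t : ℂ => t • fderiv ℂ F ((1 : ℂ), Z) ((1 : ℂ), c))
        (fderiv ℂ F ((1 : ℂ), Z) ((1 : ℂ), c)) 1 := by
      simpa using (hasDerivAt_id (1 : ℂ)).smul_const (fderiv ℂ F ((1 : ℂ), Z) ((1 : ℂ), c))
    refine h1.unique (h2.congr_of_eventuallyEq ?_)
    filter_upwards [isOpen_ne.mem_nhds (one_ne_zero : (1 : ℂ) ≠ 0)] with t ht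
    simp only [Function.comp_apply, hhom' t ht]
    rfl
  rw [key]
  have hn : HasFDerivAt (fun u : ℂ × (Fin n → ℂ) => H (fun _ => u.2))
      ((Hc.linearDeriv (fun _ => Z)).comp (ContinuousLinearMap.pi fun _ =>
        ContinuousLinearMap.snd ℂ ℂ (Fin n → ℂ))) ((1 : ℂ), Z) :=
    HasFDerivAt.comp ((1 : ℂ), Z) (Hc.hasFDerivAt (fun _ => Z))
      (ContinuousLinearMap.hasFDerivAt (ContinuousLinearMap.pi fun _ =>
        ContinuousLinearMap.snd ℂ ℂ (Fin n → ℂ)))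
  have hden := (hasFDerivAt_fst (𝕜 := ℂ) (p := ((1 : ℂ), Z))).pow (d - 2)
  have hsum : ∀ i : Fin d, H (Function.update (fun _ => Z) i c)
      = H (Function.update (fun _ => Z) (⟨d - 1, by omega⟩ : Fin d) c) := by
    intro i
    rw [← hsymm (Equiv.swap i ⟨d - 1, by omega⟩)]
    congr 1
    ext j : 1
    simp only [Function.comp_apply, Function.update_apply]
    congr 1
    rw [Equiv.swap_apply_eq_iff]
    simp
  have hl : HasDerivAt (fun s : ℂ => ((1 : ℂ), Z) + s • ((1 : ℂ), c)) ((1 : ℂ), c) 0 := by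
    simpa using ((hasDerivAt_id (0 : ℂ)).smul_const ((1 : ℂ), c)).const_add ((1 : ℂ), Z)
  have h1 := HasFDerivAt.comp_hasDerivAt_of_eq (0 : ℂ) hn hl (by simp)
  have h2 := HasFDerivAt.comp_hasDerivAt_of_eq (0 : ℂ) hden hl (by simp)
  have h3 := HasFDerivAt.comp_hasDerivAt_of_eq (0 : ℂ)
    (hFc.differentiableAt (by norm_num)).hasFDerivAt hl (by simp)
  have h4 := h1.div h2 (by simp)
  have e := h3.unique h4
  rw [e]
  simp [ContinuousMultilinearMap.linearDeriv_apply, ← hH, hsum, Nat.cast_sub hd]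
  ring
end

section
/- Let h : ℝⁿ → ℝ be a polynomial function homogeneous of degree d ≥ 1 and let H be a nonempty subset of the level set {x ∈ ℝⁿ : h(x) = 1} that is open in the subspace topology of {h = 1}. If A : ℝⁿ → ℝⁿ is a linear map with A(H) ⊆ H, then h(Ax) = h(x) for all x ∈ ℝⁿ. -/
/-- If `h : ℝⁿ → ℝ` is a polynomial function homogeneous of degree `d ≥ 1`, `H` is a nonempty
relatively open subset of the level set `{h = 1}`, and `A` is a linear map with `A(H) ⊆ H`,
then `h ∘ A = h` on all of `ℝⁿ`. -/
theorem stmt_7 (n d : ℕ) (hd : 1 ≤ d) (h : (Fin n → ℝ) → ℝ)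
    (hpoly : ∃ p : MvPolynomial (Fin n) ℝ, ∀ x, h x = MvPolynomial.eval x p)
    (hhom : ∀ (c : ℝ) (x : Fin n → ℝ), h (c • x) = c ^ d * h x)
    (H : Set (Fin n → ℝ)) (hHne : H.Nonempty) (hH1 : H ⊆ {x | h x = 1})
    (hHopen : ∃ U : Set (Fin n → ℝ), IsOpen U ∧ H = U ∩ {x | h x = 1})
    (A : (Fin n → ℝ) →ₗ[ℝ] (Fin n → ℝ)) (hA : ∀ x ∈ H, A x ∈ H) :
    ∀ x : Fin n → ℝ, h (A x) = h x := by
  obtain ⟨p, hp⟩ := hpoly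
  obtain ⟨U, hU, hHU⟩ := hHopen
  obtain ⟨x0, hx0⟩ := hHne
  have h1 : h x0 = 1 := hH1 hx0
  have hx0U : x0 ∈ U := by rw [hHU] at hx0; exact hx0.1
  have hpe : h = fun x => MvPolynomial.eval x p := funext hp
  have han : AnalyticOnNhd ℝ h Set.univ := by
    rw [hpe]; exact AnalyticOnNhd.eval_mvPolynomial p
  have hcont : Continuous h := by
    rw [hpe]; exact MvPolynomial.continuous_eval p
  have hanA : AnalyticOnNhd ℝ (fun x => h (A x)) Set.univ := by
    intro x _
    have hAx : AnalyticAt ℝ (fun x => A x) x := (LinearMap.toContinuousLinearMap A).analyticAt x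
    exact (han (A x) (Set.mem_univ _)).comp hAx
  have hd0 : d ≠ 0 := by omega
  have hev : (fun x => h (A x)) =ᶠ[nhds x0] h := by
    have hpos : ∀ᶠ y in nhds x0, 0 < h y :=
      (isOpen_lt continuous_const hcont).mem_nhds (by simp [h1])
    have hca : ContinuousAt (fun y => (h y) ^ (-(1 / (d : ℝ))) • y) x0 := by
      have hr : ContinuousAt (fun y => (h y) ^ (-(1 / (d : ℝ)))) x0 :=
        hcont.continuousAt.rpow_const (Or.inl (by rw [h1]; exact one_ne_zero))
      exact hr.smul continuousAt_id
    have hmem : ∀ᶠ y in nhds x0, (h y) ^ (-(1 / (d : ℝ))) • y ∈ U := by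
      refine hca.eventually (hU.mem_nhds ?_)
      simpa [h1] using hx0U
    filter_upwards [hpos, hmem] with y hy hyU
    have hc : ((h y) ^ (-(1 / (d : ℝ)))) ^ d = (h y)⁻¹ := by
      rw [← Real.rpow_natCast, ← Real.rpow_mul hy.le]
      have : -(1 / (d : ℝ)) * d = -1 := by
        have : (d : ℝ) ≠ 0 := by exact_mod_cast hd0
        field_simp
      rw [this, Real.rpow_neg_one]
    have hyH : (h y) ^ (-(1 / (d : ℝ))) • y ∈ H := by
      rw [hHU]
      refine ⟨hyU, ?_⟩
      change h _ = 1
      rw [hhom, hc, inv_mul_cancel₀ hy.ne']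
    have h2 : h (A _) = 1 := hH1 (hA _ hyH)
    rw [map_smul, hhom, hc] at h2
    field_simp at h2
    exact h2
  exact fun x => congrFun (hanA.eq_of_eventuallyEq han hev) x
end

section
/- Let x, y, z be finite-dimensional real inner product spaces with dim x ≥ 1 and let ψ : x × y → z be a bilinear map which is isometric, i.e. ‖ψ(X,Y)‖ = ‖X‖·‖Y‖ for all X ∈ x, Y ∈ y. Define the transpose ψ^t : x × z → y by ⟨ψ^t(X,Z), Y⟩ = ⟨Z, ψ(X,Y)⟩ for all X ∈ x, Y ∈ y, Z ∈ z. Then ψ^t is isometric (‖ψ^t(X,Z)‖ = ‖X‖·‖Z‖ for all X ∈ x, Z ∈ z) if and only if ψ is special, i.e. dim y = dim z. -/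
open RealInnerProductSpace

/-- For an isometric bilinear map `ψ : x × y → z` of finite-dimensional real inner product
spaces with `dim x ≥ 1`, the transpose `ψᵗ : x × z → y` (defined by
`⟨ψᵗ(X,Z), Y⟩ = ⟨Z, ψ(X,Y)⟩`) is isometric iff `ψ` is special, i.e. `dim y = dim z`. -/
theorem stmt_15 (x y z : Type*)
    [NormedAddCommGroup x] [InnerProductSpace ℝ x] [FiniteDimensional ℝ x]
    [NormedAddCommGroup y] [InnerProductSpace ℝ y] [FiniteDimensional ℝ y]
    [NormedAddCommGroup z] [InnerProductSpace ℝ z] [FiniteDimensional ℝ z]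
    (hx : 1 ≤ Module.finrank ℝ x)
    (ψ : x →ₗ[ℝ] y →ₗ[ℝ] z)
    (hiso : ∀ (X : x) (Y : y), ‖ψ X Y‖ = ‖X‖ * ‖Y‖)
    (ψt : x →ₗ[ℝ] z →ₗ[ℝ] y)
    (hψt : ∀ (X : x) (Z : z) (Y : y), ⟪ψt X Z, Y⟫ = ⟪Z, ψ X Y⟫) :
    (∀ (X : x) (Z : z), ‖ψt X Z‖ = ‖X‖ * ‖Z‖) ↔
      Module.finrank ℝ y = Module.finrank ℝ z := by
  have inj : ∀ X : x, X ≠ 0 → Function.Injective (ψ X) := by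
    intro X hX
    rw [injective_iff_map_eq_zero]
    intro Y hY
    have h := hiso X Y
    rw [hY, norm_zero] at h
    rcases mul_eq_zero.mp h.symm with h | h
    · exact absurd (norm_eq_zero.mp h) hX
    · exact norm_eq_zero.mp h
  constructor
  · intro ht
    have : Nontrivial x := Module.nontrivial_of_finrank_pos (R := ℝ) (by omega)
    obtain ⟨X, hX⟩ := exists_ne (0 : x)
    apply le_antisymm
    · exact LinearMap.finrank_le_finrank_of_injective (inj X hX)
    · refine LinearMap.finrank_le_finrank_of_injective (f := ψt X) ?_
      rw [injective_iff_map_eq_zero]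
      intro Z hZ
      have h := ht X Z
      rw [hZ, norm_zero] at h
      rcases mul_eq_zero.mp h.symm with h | h
      · exact absurd (norm_eq_zero.mp h) hX
      · exact norm_eq_zero.mp h
  · intro hd X Z
    by_cases hX : X = 0
    · subst hX
      simp
    obtain ⟨Y, rfl⟩ := (LinearMap.injective_iff_surjective_of_finrank_eq_finrank hd).mp (inj X hX) Z
    have key : ψt X (ψ X Y) = (‖X‖ * ‖X‖) • Y := by
      apply ext_inner_right ℝ
      intro W
      rw [hψt, real_inner_smul_left,
        real_inner_eq_norm_add_mul_self_sub_norm_mul_self_sub_norm_mul_self_div_two,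
        real_inner_eq_norm_add_mul_self_sub_norm_mul_self_sub_norm_mul_self_div_two,
        ← map_add, hiso, hiso, hiso]
      ring
    rw [key, norm_smul, hiso, norm_mul, norm_norm, mul_assoc]
end

section
/- Let b be a nondegenerate symmetric bilinear form on ℝⁿ and let S = {x ∈ ℝⁿ : b(x,x) = 1}. If x and y lie in the same connected component of S, then there exists g in the connected component of the identity of the orthogonal group O(b) = {g ∈ GL(n,ℝ) : b(gu, gv) = b(u,v) for all u,v ∈ ℝⁿ} with g(x) = y. In particular, the identity component of O(b) acts transitively on each connected component of S. -/
open scoped MatrixGroups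

namespace PseudoSphere

variable {n : ℕ}

/-- The reflection along `w`. -/
noncomputable def refl (b : (Fin n → ℝ) →ₗ[ℝ] (Fin n → ℝ) →ₗ[ℝ] ℝ) (w : Fin n → ℝ) :
    Matrix (Fin n) (Fin n) ℝ :=
  Matrix.of fun i j => (if i = j then 1 else 0) - 2 / b w w * b w (Pi.single j 1) * w i

lemma refl_mulVec (b : (Fin n → ℝ) →ₗ[ℝ] (Fin n → ℝ) →ₗ[ℝ] ℝ) (w u : Fin n → ℝ) :
    (refl b w).mulVec u = u - (2 / b w w * b w u) • w := by
  have hu : b w u = ∑ j, u j * b w (Pi.single j 1) := by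
    conv_lhs => rw [pi_eq_sum_univ' u]
    simp [map_sum]
  ext i
  simp only [refl, Matrix.mulVec, dotProduct, Matrix.of_apply, sub_mul, Finset.sum_sub_distrib,
    Pi.sub_apply, Pi.smul_apply, smul_eq_mul, ite_mul, one_mul, zero_mul,
    Finset.sum_ite_eq, Finset.mem_univ, if_true]
  rw [hu, Finset.mul_sum, Finset.sum_mul]
  congr 1
  exact Finset.sum_congr rfl fun j _ => by ring

lemma refl_sq (b : (Fin n → ℝ) →ₗ[ℝ] (Fin n → ℝ) →ₗ[ℝ] ℝ) (w : Fin n → ℝ) (hw : b w w ≠ 0) :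
    refl b w * refl b w = 1 := by
  apply Matrix.toLin'.injective
  apply LinearMap.ext
  intro u
  rw [Matrix.toLin'_apply, ← Matrix.mulVec_mulVec, refl_mulVec, refl_mulVec, Matrix.toLin'_one]
  ext i
  simp only [map_sub, map_smul, smul_eq_mul, Pi.sub_apply, Pi.smul_apply, LinearMap.id_apply]
  field_simp
  ring

lemma refl_isom (b : (Fin n → ℝ) →ₗ[ℝ] (Fin n → ℝ) →ₗ[ℝ] ℝ)
    (hsymm : ∀ u v, b u v = b v u) (w : Fin n → ℝ) (hw : b w w ≠ 0) (u v : Fin n → ℝ) :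
    b ((refl b w).mulVec u) ((refl b w).mulVec v) = b u v := by
  rw [refl_mulVec, refl_mulVec]
  simp only [map_sub, map_smul, smul_eq_mul, LinearMap.sub_apply, LinearMap.smul_apply]
  rw [hsymm u w]
  field_simp
  ring

/-- The reflection as a unit. -/
noncomputable def reflU (b : (Fin n → ℝ) →ₗ[ℝ] (Fin n → ℝ) →ₗ[ℝ] ℝ) (w : Fin n → ℝ)
    (hw : b w w ≠ 0) : GL (Fin n) ℝ :=
  ⟨refl b w, refl b w, refl_sq b w hw, refl_sq b w hw⟩

/-- The orthogonal group as a set. -/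
def orth (b : (Fin n → ℝ) →ₗ[ℝ] (Fin n → ℝ) →ₗ[ℝ] ℝ) : Set (GL (Fin n) ℝ) :=
  {g : GL (Fin n) ℝ | ∀ u v : Fin n → ℝ,
          b (((g : GL (Fin n) ℝ) : Matrix (Fin n) (Fin n) ℝ).mulVec u)
            (((g : GL (Fin n) ℝ) : Matrix (Fin n) (Fin n) ℝ).mulVec v) = b u v}

lemma orth_mul (b : (Fin n → ℝ) →ₗ[ℝ] (Fin n → ℝ) →ₗ[ℝ] ℝ) {g h : GL (Fin n) ℝ}
    (hg : g ∈ orth b) (hh : h ∈ orth b) : g * h ∈ orth b := by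
  intro u v
  rw [Units.val_mul, ← Matrix.mulVec_mulVec, ← Matrix.mulVec_mulVec, hg, hh]

lemma step (b : (Fin n → ℝ) →ₗ[ℝ] (Fin n → ℝ) →ₗ[ℝ] ℝ)
    (hsymm : ∀ u v, b u v = b v u) (x y : Fin n → ℝ) (hx : b x x = 1) (hy : b y y = 1)
    (hxy : -1 < b x y) (h : GL (Fin n) ℝ) (hh : h ∈ connectedComponentIn (orth b) 1) :
    ∃ g ∈ connectedComponentIn (orth b) 1,
      (g : Matrix (Fin n) (Fin n) ℝ) = refl b (x + y) * refl b x * h := by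
  have hexp : ∀ t : ℝ, b (x + t • y) (x + t • y) = 1 + 2 * t * b x y + t ^ 2 := by
    intro t
    simp only [map_add, map_smul, smul_eq_mul, LinearMap.add_apply, LinearMap.smul_apply, hx, hy,
      hsymm y x]
    ring
  have hw : ∀ t : unitInterval, b (x + (t : ℝ) • y) (x + (t : ℝ) • y) ≠ 0 := by
    intro t
    rw [hexp]
    have h0 := t.2.1
    rcases h0.eq_or_lt with h0 | h0
    · rw [← h0]; norm_num
    · nlinarith [mul_pos h0 (by linarith : 0 < b x y + 1), sq_nonneg (1 - (t : ℝ))]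
  have hx0 : b x x ≠ 0 := by rw [hx]; norm_num
  have hcont : Continuous fun t : unitInterval => refl b (x + (t : ℝ) • y) := by
    refine continuous_matrix fun i j => ?_
    have h1 : ∀ t : unitInterval, 1 + 2 * (t : ℝ) * b x y + (t : ℝ) ^ 2 ≠ 0 := fun t => by
      rw [← hexp]; exact hw t
    simp only [refl, Matrix.of_apply, hexp]
    simp only [map_add, map_smul, smul_eq_mul, LinearMap.add_apply, LinearMap.smul_apply,
      Pi.add_apply, Pi.smul_apply]
    fun_prop (disch := exact h1 _)
  let r : unitInterval → GL (Fin n) ℝ := fun t => reflU b (x + (t : ℝ) • y) (hw t)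
  have hr : Continuous r := Units.continuous_iff.2 ⟨hcont, hcont⟩
  let γ : unitInterval → GL (Fin n) ℝ := fun t => r t * reflU b x hx0 * h
  have hγ : Continuous γ := (hr.mul continuous_const).mul continuous_const
  have hho : h ∈ orth b := connectedComponentIn_subset _ _ hh
  have hγo : Set.range γ ⊆ orth b := by
    rintro _ ⟨t, rfl⟩
    exact orth_mul b (orth_mul b (refl_isom b hsymm _ (hw t)) (refl_isom b hsymm _ hx0)) hho
  have hγ0 : γ 0 = h := by
    apply Units.ext
    have : refl b x * refl b x * (h : Matrix (Fin n) (Fin n) ℝ) = h := by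
      rw [refl_sq b x hx0, one_mul]
    simpa [γ, r, reflU] using this
  have hpre : IsPreconnected (Set.range γ) := isPreconnected_range hγ
  have hsub := hpre.subset_connectedComponentIn (x := h) ⟨0, hγ0⟩ hγo
  rw [← connectedComponentIn_eq hh] at hsub
  refine ⟨γ 1, hsub ⟨1, rfl⟩, ?_⟩
  simp [γ, r, reflU]

lemma refl_map (b : (Fin n → ℝ) →ₗ[ℝ] (Fin n → ℝ) →ₗ[ℝ] ℝ)
    (hsymm : ∀ u v, b u v = b v u) (x y : Fin n → ℝ) (hx : b x x = 1) (hy : b y y = 1)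
    (hxy : -1 < b x y) : (refl b (x + y) * refl b x).mulVec x = y := by
  rw [← Matrix.mulVec_mulVec, refl_mulVec b x, refl_mulVec]
  ext i
  have h2 : 1 + b x y ≠ 0 := by linarith
  simp only [map_add, map_sub, map_smul, smul_eq_mul, LinearMap.add_apply, hx, hy, hsymm y x,
    Pi.add_apply, Pi.sub_apply, Pi.smul_apply]
  rw [show 1 + b x y + (b x y + 1) = 2 * (1 + b x y) by ring]
  field_simp
  ring

end PseudoSphere

/-- If `b` is a nondegenerate symmetric bilinear form on `ℝⁿ` and `x, y` lie in the same
connected component of the pseudo sphere `S = {b(x,x) = 1}`, then some element of the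
identity component of the orthogonal group `O(b) ⊆ GL(n,ℝ)` maps `x` to `y`. -/
theorem stmt_16 (n : ℕ)
    (b : (Fin n → ℝ) →ₗ[ℝ] (Fin n → ℝ) →ₗ[ℝ] ℝ)
    (hsymm : ∀ u v, b u v = b v u)
    (hnondeg : ∀ u, (∀ v, b u v = 0) → u = 0)
    (x y : Fin n → ℝ)
    (hx : b x x = 1) (hy : b y y = 1)
    (hcomp : y ∈ connectedComponentIn {v : Fin n → ℝ | b v v = 1} x) :
    ∃ g ∈ connectedComponentIn
        {g : GL (Fin n) ℝ | ∀ u v : Fin n → ℝ,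
          b (((g : GL (Fin n) ℝ) : Matrix (Fin n) (Fin n) ℝ).mulVec u)
            (((g : GL (Fin n) ℝ) : Matrix (Fin n) (Fin n) ℝ).mulVec v) = b u v}
        (1 : GL (Fin n) ℝ),
      ((g : GL (Fin n) ℝ) : Matrix (Fin n) (Fin n) ℝ).mulVec x = y := by
  classical
  have key : ∀ z w : Fin n → ℝ, b z z = 1 → b w w = 1 → -1 < b z w →
      (∃ g ∈ connectedComponentIn (PseudoSphere.orth b) (1 : GL (Fin n) ℝ),
        (g : Matrix (Fin n) (Fin n) ℝ).mulVec x = z) →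
      (∃ g ∈ connectedComponentIn (PseudoSphere.orth b) (1 : GL (Fin n) ℝ),
        (g : Matrix (Fin n) (Fin n) ℝ).mulVec x = w) := by
    rintro z w hz hw hzw ⟨h, hh, hhx⟩
    obtain ⟨g, hg, hge⟩ := PseudoSphere.step b hsymm z w hz hw hzw h hh
    refine ⟨g, hg, ?_⟩
    rw [hge, ← Matrix.mulVec_mulVec, hhx, PseudoSphere.refl_map b hsymm z w hz hw hzw]
  change ∃ g ∈ connectedComponentIn (PseudoSphere.orth b) (1 : GL (Fin n) ℝ),
        (g : Matrix (Fin n) (Fin n) ℝ).mulVec x = y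
  let P : (Fin n → ℝ) → Prop := fun z =>
    ∃ g ∈ connectedComponentIn (PseudoSphere.orth b) (1 : GL (Fin n) ℝ),
        (g : Matrix (Fin n) (Fin n) ℝ).mulVec x = z
  have hPx : P x := by
    refine ⟨1, mem_connectedComponentIn ?_, by simp⟩
    intro u v
    simp
  by_contra hPy
  change ¬ P y at hPy
  have hopen : ∀ Q : (Fin n → ℝ) → Prop, IsOpen {v | ∃ z, b z z = 1 ∧ Q z ∧ -1 < b z v} := by
    intro Q
    have : {v | ∃ z, b z z = 1 ∧ Q z ∧ -1 < b z v} =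
        ⋃ z ∈ {z | b z z = 1 ∧ Q z}, {v | -1 < b z v} := by
      ext v; simp [and_assoc]
    rw [this]
    refine isOpen_biUnion fun z _ => ?_
    exact isOpen_lt continuous_const (b z).continuous_of_finiteDimensional
  have hS := connectedComponentIn_subset {v : Fin n → ℝ | b v v = 1} x
  have hxC : x ∈ connectedComponentIn {v : Fin n → ℝ | b v v = 1} x :=
    mem_connectedComponentIn hx
  obtain ⟨v, hv, ⟨z, hz, hPz, hzv⟩, ⟨w, hw, hPw, hwv⟩⟩ :=
    isPreconnected_connectedComponentIn _ _ (hopen P) (hopen fun z => ¬ P z)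
    (fun v hv => by
      have hv1 : b v v = 1 := hS hv
      have hv2 : -1 < b v v := by rw [hv1]; norm_num
      by_cases h : P v
      · exact Or.inl ⟨v, hv1, h, hv2⟩
      · exact Or.inr ⟨v, hv1, h, hv2⟩)
    ⟨x, hxC, x, hx, hPx, by rw [hx]; norm_num⟩
    ⟨y, hcomp, y, hy, hPy, by rw [hy]; norm_num⟩
  have hv1 : b v v = 1 := hS hv
  exact hPw (key v w hv1 hw (by rw [hsymm]; exact hwv) (key z v hz hv1 hzv hPz))
end

section
/- Let K be a compact subgroup of GL(n,ℝ), let V ⊆ ℝⁿ be a nonempty open convex cone (λV = V for all λ > 0) containing no affine line, and let h : ℝⁿ → ℝ be a polynomial function homogeneous of degree d ≥ 1 with h > 0 on V, such that k(V) = V and h∘k = h for every k ∈ K. Then K has a fixed point on the hypersurface H = V ∩ {h = 1}: there exists v ∈ V with h(v) = 1 and k·v = v for all k ∈ K. -/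
open scoped MatrixGroups

open MeasureTheory in
theorem fixed_aux (n : ℕ) 
    (K : Subgroup (GL (Fin n) ℝ)) (hK : IsCompact (K : Set (GL (Fin n) ℝ)))
    (V : Set (Fin n → ℝ)) (hVne : V.Nonempty) (hVopen : IsOpen V) (hVconv : Convex ℝ V)
    (hKV : ∀ g ∈ K, (fun x => ((g : GL (Fin n) ℝ) : Matrix (Fin n) (Fin n) ℝ).mulVec x) '' V = V) :
    ∃ v ∈ V, ∀ g ∈ K, ((g : GL (Fin n) ℝ) : Matrix (Fin n) (Fin n) ℝ).mulVec v = v := by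
  obtain ⟨x, hx⟩ := hVne
  have : CompactSpace K := isCompact_iff_compactSpace.mp hK
  let : MeasurableSpace K := borel K
  have : BorelSpace K := ⟨rfl⟩
  let μ : Measure K := Measure.haarMeasure ⊤
  have : IsProbabilityMeasure μ := ⟨by
    have := Measure.haarMeasure_self (G := K) (K₀ := ⊤)
    simpa using this⟩
  let f : K → (Fin n → ℝ) := fun k => ((k : GL (Fin n) ℝ) : Matrix (Fin n) (Fin n) ℝ).mulVec x
  have hf : Continuous f := by
    have : Continuous (fun k : K => ((k : GL (Fin n) ℝ) : Matrix (Fin n) (Fin n) ℝ)) :=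
      Units.continuous_val.comp continuous_subtype_val
    exact this.matrix_mulVec continuous_const
  have hint : Integrable f μ := hf.integrable_of_hasCompactSupport (HasCompactSupport.of_compactSpace f)
  have hrange : Set.range f ⊆ V := by
    rintro _ ⟨k, rfl⟩
    rw [← hKV k k.2]
    exact ⟨x, hx, rfl⟩
  have hmem : ∫ k, f k ∂μ ∈ V := by
    by_contra hnot
    obtain ⟨L, hL⟩ := geometric_hahn_banach_open_point hVconv hVopen hnot
    obtain ⟨k₀, -, hk₀⟩ := isCompact_univ.exists_isMaxOn (Set.univ_nonempty (α := K))
      (L.continuous.comp hf).continuousOn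
    have h1 : ∫ k, f k ∂μ ∈ {y | L y ≤ L (f k₀)} :=
      Convex.integral_mem (convex_halfSpace_le L.toLinearMap.isLinear _)
        (isClosed_le L.continuous continuous_const)
        (Filter.Eventually.of_forall fun k => hk₀ (Set.mem_univ k)) hint
    exact absurd (hL _ (hrange ⟨k₀, rfl⟩)) (not_lt.mpr h1)
  refine ⟨_, hmem, fun g hg => ?_⟩
  let L : (Fin n → ℝ) →L[ℝ] (Fin n → ℝ) :=
    LinearMap.toContinuousLinearMap (Matrix.mulVecLin ((g : GL (Fin n) ℝ) : Matrix (Fin n) (Fin n) ℝ))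
  change L (∫ k, f k ∂μ) = _
  rw [← L.integral_comp_comm hint, ← integral_mul_left_eq_self f (⟨g, hg⟩ : K)]
  congr 1
  funext k
  simp [L, f, Matrix.mulVec_mulVec]

/-- A compact subgroup `K ⊆ GL(n,ℝ)` preserving an open convex cone `V` containing no
affine line and a positive homogeneous polynomial `h` of degree `d ≥ 1` on `V` has a fixed
point on the hypersurface `H = V ∩ {h = 1}`. -/
theorem stmt_19 (n d : ℕ) (hd : 1 ≤ d)
    (K : Subgroup (GL (Fin n) ℝ)) (hK : IsCompact (K : Set (GL (Fin n) ℝ)))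
    (V : Set (Fin n → ℝ)) (hVne : V.Nonempty) (hVopen : IsOpen V) (hVconv : Convex ℝ V)
    (hVcone : ∀ c : ℝ, 0 < c → ∀ x ∈ V, c • x ∈ V)
    (hVline : ¬ ∃ (x v : Fin n → ℝ), v ≠ 0 ∧ ∀ t : ℝ, x + t • v ∈ V)
    (h : (Fin n → ℝ) → ℝ)
    (hpoly : ∃ p : MvPolynomial (Fin n) ℝ, ∀ x, h x = MvPolynomial.eval x p)
    (hhom : ∀ (c : ℝ) (x : Fin n → ℝ), h (c • x) = c ^ d * h x)
    (hpos : ∀ x ∈ V, 0 < h x)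
    (hKV : ∀ g ∈ K, (fun x => ((g : GL (Fin n) ℝ) : Matrix (Fin n) (Fin n) ℝ).mulVec x) '' V = V)
    (hKh : ∀ g ∈ K, ∀ x : Fin n → ℝ,
      h (((g : GL (Fin n) ℝ) : Matrix (Fin n) (Fin n) ℝ).mulVec x) = h x) :
    ∃ v ∈ V, h v = 1 ∧
      ∀ g ∈ K, ((g : GL (Fin n) ℝ) : Matrix (Fin n) (Fin n) ℝ).mulVec v = v := by
  obtain ⟨v, hv, hfix⟩ := fixed_aux n K hK V hVne hVopen hVconv hKV
  have hp := hpos v hv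
  have hinv : 0 < (h v)⁻¹ := inv_pos.mpr hp
  refine ⟨((h v)⁻¹ ^ ((d : ℝ)⁻¹)) • v, hVcone _ (Real.rpow_pos_of_pos hinv _) v hv, ?_, ?_⟩
  · rw [hhom, Real.rpow_inv_natCast_pow hinv.le (by omega), inv_mul_cancel₀ hp.ne']
  · intro g hg
    rw [Matrix.mulVec_smul, hfix g hg]
end
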